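/- Let d ≥ 2 and let B be a fixed real d×d matrix. Let w₁, w₂ ∈ ℝ^d × S₀^{d×d} and μ₁, μ₂ > 0 with μ₁ + μ₂ = 1 be such that w̄ := w₂ − w₁ ∈ Λ, and set w := μ₁w₁ + μ₂w₂. Then for every bounded open set O ⊂ ℝ^d and every ε > 0 there exist w̃ = (ṽ, Ũ) ∈ C_c^∞(O; ℝ^d × S₀^{d×d}) and q ∈ C_c^∞(O) with div Ũ + ∇q = Bṽ and div ṽ = 0 on ℝ^d, such that: (a) dist(w + w̃(x), [w₁, w₂]) < ε for all x ∈ O, where [w₁,w₂] is the closed segment joining w₁ and w₂; (b) there exist disjoint open subsets O₁, O₂ ⊂ O such that for i = 1, 2, |w + w̃(x) − w_i| < ε for all x ∈ O_i, and ||O_i| − μ_i|O|| < ε, where |·| denotes d-dimensional Lebesgue measure. -/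

import Mathlib

open MeasureTheory

noncomputable section

/-- Vectors in ℝ^d. -/
abbrev Vec (d : ℕ) := Fin d → ℝ

/-- Matrices (as functions). -/
abbrev Mat (d : ℕ) := Fin d → Fin d → ℝ

/-- The space S₀^{d×d} of symmetric trace-free d×d matrices, as a submodule. -/
def S0 (d : ℕ) : Submodule ℝ (Mat d) where
  carrier := {U | (∀ i j, U i j = U j i) ∧ ∑ i, U i i = 0}
  add_mem' := by
    rintro U V ⟨hU1, hU2⟩ ⟨hV1, hV2⟩
    refine ⟨fun i j => by simp [hU1 i j, hV1 i j], ?_⟩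
    simp [Finset.sum_add_distrib, hU2, hV2]
  zero_mem' := ⟨fun i j => rfl, by simp⟩
  smul_mem' := by
    rintro c U ⟨hU1, hU2⟩
    refine ⟨fun i j => by simp [hU1 i j], ?_⟩
    simp [← Finset.mul_sum, hU2]

/-- Partial derivative ∂ᵢ of a scalar function. -/
def pd {d : ℕ} (i : Fin d) (f : Vec d → ℝ) (x : Vec d) : ℝ :=
  fderiv ℝ f x (Pi.single i 1)

/-- The wave cone Λ: states `(v̄, Ū)` with `v̄ ≠ 0` for which there are `q̄ ∈ ℝ` and
`ξ ≠ 0` with `Ū ξ + q̄ ξ = 0` and `v̄ · ξ = 0`. -/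
def Lam (d : ℕ) : Set (Vec d × S0 d) :=
  {w | w.1 ≠ 0 ∧ ∃ (q : ℝ) (ξ : Vec d), ξ ≠ 0 ∧
    (∀ i, (∑ j, (w.2 : Mat d) i j * ξ j) + q * ξ i = 0) ∧ (∑ i, w.1 i * ξ i = 0)}


section oneD
open Filter Topology intervalIntegral

lemma aux_antideriv (f : ℝ → ℝ) (hf : ContDiff ℝ (⊤ : ℕ∞) f) (hp : Function.Periodic f 1) :
    ∃ F : ℝ → ℝ, ContDiff ℝ (⊤ : ℕ∞) F ∧ Function.Periodic F 1 ∧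
      (∀ t, HasDerivAt F (f t - ∫ s in (-1/2:ℝ)..(1/2), f s) t) ∧ 
      (∫ s in (-1/2:ℝ)..(1/2), F s) = 0 := by
  set m := ∫ s in (-1/2:ℝ)..(1/2), f s with hm
  have hc : Continuous (fun t => f t - m) := hf.continuous.sub continuous_const
  have hi : ∀ a b, IntervalIntegrable (fun t => f t - m) volume a b := fun a b => hc.intervalIntegrable a b
  set G : ℝ → ℝ := fun t => ∫ s in (0:ℝ)..t, (f s - m) with hG
  have hGd : ∀ t, HasDerivAt G (f t - m) t := fun t =>
    integral_hasDerivAt_right (hi 0 t) (hc.stronglyMeasurableAtFilter _ _) hc.continuousAt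
  have hper : Function.Periodic G 1 := by
    intro t
    have h1 : G (t+1) = G t + ∫ s in t..(t+1), (f s - m) := by
      simp only [hG]; rw [integral_add_adjacent_intervals (hi _ _) (hi _ _)]
    have h2 : ∫ s in t..(t+1), (f s - m) = 0 := by
      have hp' : Function.Periodic (fun t => f t - m) 1 := fun t => by simp [hp t]
      rw [hp'.intervalIntegral_add_eq t (-1/2)]
      rw [integral_sub (hf.continuous.intervalIntegrable _ _) (by simp)]
      norm_num
      norm_num at hm
      rw [hm]; simp
    rw [h1, h2, add_zero]
  have hGs : ContDiff ℝ (⊤ : ℕ∞) G := by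
    rw [contDiff_infty_iff_deriv]
    refine ⟨fun t => (hGd t).differentiableAt, ?_⟩
    have : deriv G = fun t => f t - m := funext fun t => (hGd t).deriv
    rw [this]; exact hf.sub contDiff_const
  refine ⟨fun t => G t - ∫ s in (-1/2:ℝ)..(1/2), G s, hGs.sub contDiff_const, fun t => by simp [hper t], fun t => (hGd t).sub_const _, ?_⟩
  rw [integral_sub (hGs.continuous.intervalIntegrable _ _) (by simp)]
  norm_num

lemma aux_bdd (f : ℝ → ℝ) (hf : Continuous f) (hp : Function.Periodic f 1) :
    ∃ C, ∀ t, |f t| ≤ C := by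
  obtain ⟨C, hC⟩ := (hp.isBounded_of_continuous one_ne_zero hf).exists_norm_le
  exact ⟨C, fun t => hC _ ⟨t, rfl⟩⟩

lemma aux_g (μ κ : ℝ) (h0 : 0 < μ) (h1 : μ < 1) (hκ : 0 < κ) :
    ∃ g : ℝ → ℝ, ContDiff ℝ (⊤ : ℕ∞) g ∧ Function.Periodic g 1 ∧ (∀ t, 0 ≤ g t ∧ g t ≤ 1) ∧
      |(∫ s in (-1/2:ℝ)..(1/2), g s) - μ| < κ ∧ (∫ s in (-1/2:ℝ)..(1/2), g s * (1 - g s)) < κ := by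
  set c := Real.cos (Real.pi * μ) with hcdef
  set G : ℕ → ℝ → ℝ := fun n t => Real.smoothTransition (n * (Real.cos (2 * Real.pi * t) - c)) with hG
  have hs : ∀ n, ContDiff ℝ (⊤ : ℕ∞) (G n) := fun n => by
    have := (Real.smoothTransition.contDiff (n := (⊤:ℕ∞)))
    simp only [hG]
    refine this.comp ?_
    fun_prop
  have hper : ∀ n, Function.Periodic (G n) 1 := fun n t => by
    simp only [hG]
    rw [show 2 * Real.pi * (t+1) = 2 * Real.pi * t + 2 * Real.pi by ring, Real.cos_add_two_pi]
  have hb : ∀ n t, 0 ≤ G n t ∧ G n t ≤ 1 := fun n t =>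
    ⟨Real.smoothTransition.nonneg _, Real.smoothTransition.le_one _⟩
  set I : ℝ → ℝ := fun t => if c < Real.cos (2 * Real.pi * t) then 1 else 0 with hI
  have hlim : ∀ t, Tendsto (fun n => G n t) atTop (𝓝 (I t)) := by
    intro t
    by_cases h : c < Real.cos (2 * Real.pi * t)
    · simp only [hI, h, if_true]
      apply tendsto_const_nhds.congr'
      obtain ⟨n0, hn0⟩ := exists_nat_gt (1 / (Real.cos (2 * Real.pi * t) - c))
      filter_upwards [eventually_ge_atTop n0] with n hn
      symm
      apply Real.smoothTransition.one_of_one_le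
      have hpos : 0 < Real.cos (2 * Real.pi * t) - c := by linarith
      rw [div_lt_iff₀ hpos] at hn0
      have : (n0:ℝ) ≤ n := by exact_mod_cast hn
      nlinarith
    · simp only [hI, h, if_false]
      apply tendsto_const_nhds.congr
      intro n
      symm
      apply Real.smoothTransition.zero_of_nonpos
      have : (0:ℝ) ≤ n := by positivity
      nlinarith
  have hIint : ∫ s in (-1/2:ℝ)..(1/2), I s = μ := by
    rw [integral_of_le (by norm_num)]
    have e : ∀ s ∈ Set.Ioc (-1/2:ℝ) (1/2), I s = Set.indicator (Set.Ioo (-μ/2) (μ/2)) (fun _ => (1:ℝ)) s := by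
      intro s hs
      have key : c < Real.cos (2 * Real.pi * s) ↔ s ∈ Set.Ioo (-μ/2) (μ/2) := by
        rw [← Real.cos_abs (2 * Real.pi * s), hcdef]
        have hpi := Real.pi_pos
        have ha : |2 * Real.pi * s| = 2 * Real.pi * |s| := by rw [abs_mul, abs_of_pos (by positivity : 0 < 2 * Real.pi)]
        have hsa : |s| ≤ 1/2 := abs_le.2 ⟨by linarith [hs.1], hs.2⟩
        rw [Real.strictAntiOn_cos.lt_iff_gt, ha]
        · rw [show (s ∈ Set.Ioo (-μ/2) (μ/2) ↔ |s| < μ/2) by rw [abs_lt, Set.mem_Ioo, neg_div]]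
          constructor
          · intro h; nlinarith
          · intro h; nlinarith
        · constructor <;> nlinarith
        · rw [ha]; constructor
          · positivity
          · nlinarith
      simp only [hI, Set.indicator, key]
    rw [setIntegral_congr_fun measurableSet_Ioc e, setIntegral_indicator measurableSet_Ioo]
    have : Set.Ioc (-1/2:ℝ) (1/2) ∩ Set.Ioo (-μ/2) (μ/2) = Set.Ioo (-μ/2) (μ/2) := by
      apply Set.inter_eq_right.2
      intro s hs; exact ⟨by linarith [hs.1], by linarith [hs.2]⟩
    rw [this]
    simp
    rw [max_eq_left (by linarith)]; ring
  have l1 : Tendsto (fun n => ∫ s in (-1/2:ℝ)..(1/2), G n s) atTop (𝓝 μ) := by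
    rw [← hIint]
    apply intervalIntegral.tendsto_integral_filter_of_dominated_convergence (fun _ => 1)
    · exact Eventually.of_forall fun n => (hs n).continuous.aestronglyMeasurable
    · refine Eventually.of_forall fun n => Eventually.of_forall fun t _ => ?_
      rw [Real.norm_eq_abs, abs_le]; constructor <;> linarith [hb n t]
    · simp
    · exact Eventually.of_forall fun t _ => hlim t
  have l2 : Tendsto (fun n => ∫ s in (-1/2:ℝ)..(1/2), G n s * (1 - G n s)) atTop (𝓝 0) := by
    have : (0:ℝ) = ∫ s in (-1/2:ℝ)..(1/2), I s * (1 - I s) := by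
      have : ∀ s, I s * (1 - I s) = 0 := by intro s; simp only [hI]; split_ifs <;> simp
      simp [this]
    rw [this]
    apply intervalIntegral.tendsto_integral_filter_of_dominated_convergence (fun _ => 1)
    · exact Eventually.of_forall fun n => ((hs n).continuous.mul (continuous_const.sub (hs n).continuous)).aestronglyMeasurable
    · refine Eventually.of_forall fun n => Eventually.of_forall fun t _ => ?_
      rw [Real.norm_eq_abs, abs_le]; constructor <;> nlinarith [hb n t]
    · simp
    · exact Eventually.of_forall fun t _ => (hlim t).mul (tendsto_const_nhds.sub (hlim t))
  have e1 := (Metric.tendsto_nhds.1 l1 κ hκ)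
  have e2 := (l2.eventually (gt_mem_nhds hκ))
  obtain ⟨n, hn1, hn2⟩ := (e1.and e2).exists
  exact ⟨G n, hs n, hper n, hb n, by simpa [Real.dist_eq] using hn1, hn2⟩

end oneD

section pdlemmas
variable {d : ℕ}

lemma pd_smooth (i : Fin d) {f : Vec d → ℝ} (hf : ContDiff ℝ (⊤ : ℕ∞) f) :
    ContDiff ℝ (⊤ : ℕ∞) (pd i f) := by
  have : ContDiff ℝ (⊤ : ℕ∞) (fderiv ℝ f) := hf.fderiv_right (by simp)
  exact this.clm_apply contDiff_const

lemma sm_diff {f : Vec d → ℝ} (hf : ContDiff ℝ (⊤ : ℕ∞) f) (x : Vec d) : DifferentiableAt ℝ f x :=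
  (hf.differentiable (by simp)) x

lemma pd_comm (i j : Fin d) {f : Vec d → ℝ} (hf : ContDiff ℝ (⊤ : ℕ∞) f) (x : Vec d) :
    pd i (pd j f) x = pd j (pd i f) x := by
  have h1 : ContDiff ℝ (⊤ : ℕ∞) (fderiv ℝ f) := hf.fderiv_right (by simp)
  have h2 : DifferentiableAt ℝ (fderiv ℝ f) x := (h1.differentiable (by simp)) x
  have key : ∀ a b : Fin d, pd a (pd b f) x
      = fderiv ℝ (fderiv ℝ f) x (Pi.single a 1) (Pi.single b 1) := by
    intro a b
    unfold pd
    rw [fderiv_clm_apply h2 (by fun_prop)]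
    simp
  rw [key, key]
  have : IsSymmSndFDerivAt ℝ f x := (hf.contDiffAt).isSymmSndFDerivAt (by
    rw [minSmoothness_of_isRCLikeNormedField]; exact WithTop.coe_le_coe.2 (le_top : (2:ℕ∞) ≤ ⊤))
  exact this _ _

lemma pd_sum {ι : Type*} (u : Finset ι) (i : Fin d) (f : ι → Vec d → ℝ) (x : Vec d)
    (hf : ∀ a, ContDiff ℝ (⊤ : ℕ∞) (f a)) :
    pd i (fun y => ∑ a ∈ u, f a y) x = ∑ a ∈ u, pd i (f a) x := by
  unfold pd
  rw [fderiv_fun_sum (fun a _ => sm_diff (hf a) x)]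
  simp

lemma pd_const_mul (i : Fin d) (c : ℝ) (f : Vec d → ℝ) (x : Vec d) 
    (hf : ContDiff ℝ (⊤ : ℕ∞) f) : pd i (fun y => c * f y) x = c * pd i f x := by
  unfold pd
  rw [fderiv_const_mul (sm_diff hf x)]
  simp

lemma pd_add (i : Fin d) (f g : Vec d → ℝ) (x : Vec d) 
    (hf : ContDiff ℝ (⊤ : ℕ∞) f) (hg : ContDiff ℝ (⊤ : ℕ∞) g) :
    pd i (fun y => f y + g y) x = pd i f x + pd i g x := by
  unfold pd
  rw [fderiv_fun_add (sm_diff hf x) (sm_diff hg x)]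
  simp

lemma pd_sub (i : Fin d) (f g : Vec d → ℝ) (x : Vec d) 
    (hf : ContDiff ℝ (⊤ : ℕ∞) f) (hg : ContDiff ℝ (⊤ : ℕ∞) g) :
    pd i (fun y => f y - g y) x = pd i f x - pd i g x := by
  unfold pd
  rw [fderiv_fun_sub (sm_diff hf x) (sm_diff hg x)]
  simp

lemma pd_mul (i : Fin d) (f g : Vec d → ℝ) (x : Vec d) 
    (hf : ContDiff ℝ (⊤ : ℕ∞) f) (hg : ContDiff ℝ (⊤ : ℕ∞) g) :
    pd i (fun y => f y * g y) x = pd i f x * g x + f x * pd i g x := by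
  unfold pd
  rw [fderiv_fun_mul (sm_diff hf x) (sm_diff hg x)]
  simp; ring

lemma asym3 (A T : Fin d → Fin d → Fin d → ℝ) (hA : ∀ j k l, A j k l = - A l k j)
    (hT : ∀ j k l, T j k l = T l k j) : ∑ j, ∑ k, ∑ l, A j k l * T j k l = 0 := by
  have h : ∑ j, ∑ k, ∑ l, A j k l * T j k l = - ∑ j, ∑ k, ∑ l, A j k l * T j k l := by
    calc ∑ j, ∑ k, ∑ l, A j k l * T j k l = ∑ k, ∑ j, ∑ l, A j k l * T j k l := Finset.sum_comm
      _ = ∑ k, ∑ l, ∑ j, A j k l * T j k l := by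
          refine Finset.sum_congr rfl fun k _ => Finset.sum_comm
      _ = ∑ k, ∑ l, ∑ j, - (A l k j * T l k j) := by
          refine Finset.sum_congr rfl fun k _ => Finset.sum_congr rfl fun l _ => Finset.sum_congr rfl fun j _ => ?_
          rw [hA j k l, hT j k l]; ring
      _ = ∑ l, ∑ k, ∑ j, - (A l k j * T l k j) := Finset.sum_comm
      _ = _ := by simp [Finset.sum_neg_distrib]
  linarith

/-- Hessian and gradient. -/
def Jet (ψ : Vec d → ℝ) (x : Vec d) : Mat d × Vec d :=
  (fun k l => pd k (pd l ψ) x, fun l => pd l ψ x)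

/-- matrix-valued potential operator. -/
def MM (E : Fin d → Fin d → Fin d → Fin d → ℝ) (s : Fin d → Fin d → Fin d → ℝ)
    (X : Mat d × Vec d) (i j : Fin d) : ℝ :=
  (∑ k, ∑ l, E i j k l * X.1 k l) + ∑ l, s i j l * X.2 l

lemma MM_add (E : Fin d → Fin d → Fin d → Fin d → ℝ) (s : Fin d → Fin d → Fin d → ℝ)
    (X Y : Mat d × Vec d) (i j : Fin d) : MM E s (X + Y) i j = MM E s X i j + MM E s Y i j := by
  simp only [MM, Prod.fst_add, Prod.snd_add, Pi.add_apply, mul_add, Finset.sum_add_distrib]; ring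

lemma MM_smul (E : Fin d → Fin d → Fin d → Fin d → ℝ) (s : Fin d → Fin d → Fin d → ℝ)
    (c : ℝ) (X : Mat d × Vec d) (i j : Fin d) : MM E s (c • X) i j = c * MM E s X i j := by
  simp only [MM, Prod.smul_fst, Prod.smul_snd, Pi.smul_apply, smul_eq_mul, mul_add, Finset.mul_sum]
  congr 1
  · exact Finset.sum_congr rfl fun k _ => Finset.sum_congr rfl fun l _ => by ring
  · exact Finset.sum_congr rfl fun k _ => by ring

/-- pressure functional. -/
def qq (E : Fin d → Fin d → Fin d → Fin d → ℝ) (s : Fin d → Fin d → Fin d → ℝ) :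
    Mat d × Vec d →ₗ[ℝ] ℝ where
  toFun X := (d:ℝ)⁻¹ * ∑ i, MM E s X i i
  map_add' X Y := by simp [MM_add, Finset.sum_add_distrib, mul_add]
  map_smul' c X := by simp [MM_smul, ← Finset.mul_sum]; ring

/-- the state operator. -/
def LL (hd : d ≠ 0) (C : Fin d → Fin d → Fin d → ℝ) (E : Fin d → Fin d → Fin d → Fin d → ℝ)
    (s : Fin d → Fin d → Fin d → ℝ)
    (hE : ∀ i j k l, E i j k l = E j i k l) (hs : ∀ i j l, s i j l = s j i l) :
    Mat d × Vec d →ₗ[ℝ] Vec d × S0 d where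
  toFun X := (fun i => ∑ k, ∑ l, C i k l * X.1 k l,
    ⟨fun i j => MM E s X i j - if i = j then qq E s X else 0, by
      constructor
      · intro i j
        have : MM E s X i j = MM E s X j i := by
          simp only [MM]; simp_rw [hE i j, hs i j]
        simp only [this, eq_comm]
      · have : (d:ℝ) ≠ 0 := by exact_mod_cast hd
        simp [qq, Finset.sum_sub_distrib]
        field_simp; simp⟩)
  map_add' X Y := by
    ext i
    · simp [mul_add, Finset.sum_add_distrib]
    · rename_i j
      simp [MM_add]; split_ifs <;> ring
  map_smul' c X := by
    ext i
    · simp only [Prod.smul_fst, Pi.smul_apply, smul_eq_mul, Finset.mul_sum, RingHom.id_apply]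
      exact Finset.sum_congr rfl fun k _ => Finset.sum_congr rfl fun l _ => by ring
    · rename_i j
      simp [MM_smul]; split_ifs <;> ring

lemma aux_pot (hd : d ≠ 0) (B : Mat d) (wb : Vec d × S0 d) (qb : ℝ) (ξ : Vec d)
    (hξ : ∑ i, ξ i * ξ i = 1)
    (hU : ∀ i, (∑ j, (wb.2 : Mat d) i j * ξ j) + qb * ξ i = 0) (hv : ∑ i, wb.1 i * ξ i = 0) :
    ∃ (L : Mat d × Vec d →ₗ[ℝ] Vec d × S0 d) (ℓ : Mat d × Vec d →ₗ[ℝ] ℝ),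
      L (fun k l => ξ k * ξ l, 0) = wb ∧
      ∀ ψ : Vec d → ℝ, ContDiff ℝ (⊤ : ℕ∞) ψ →
        (∀ x i, (∑ j, pd j (fun y => ((L (Jet ψ y)).2 : Mat d) i j) x)
            + pd i (fun y => ℓ (Jet ψ y)) x = ∑ j, B i j * (L (Jet ψ x)).1 j) ∧
        (∀ x, ∑ i, pd i (fun y => (L (Jet ψ y)).1 i) x = 0) := by
  obtain ⟨v, U, hUs, hUt⟩ := wb
  simp only at hU hv
  set M : Mat d := fun i j => U i j + if i = j then qb else 0 with hM
  have hMs : ∀ i j, M i j = M j i := by intro i j; simp only [hM]; rw [hUs i j]; simp [eq_comm]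
  have hMξ : ∀ i, ∑ j, M i j * ξ j = 0 := by
    intro i; rw [← hU i]; simp [hM, add_mul, Finset.sum_add_distrib]
  have hMt : ∑ i, M i i = d * qb := by simp [hM, Finset.sum_add_distrib, hUt]
  set C : Fin d → Fin d → Fin d → ℝ := fun i k l => (v i * ξ k - ξ i * v k) * ξ l with hC
  set E : Fin d → Fin d → Fin d → Fin d → ℝ := fun i j k l =>
    M i j * ξ k * ξ l - M k j * ξ i * ξ l - M i l * ξ k * ξ j + M k l * ξ i * ξ j with hE
  set E' : Fin d → Fin d → Fin d → Fin d → ℝ := fun i j k l => (E i j k l + E i j l k) / 2 with hE'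
  set P : Fin d → Fin d → Fin d → ℝ := fun i k l => ∑ m, B i m * C m k l with hP
  set Q : Fin d → Fin d → Fin d → ℝ := fun i k l => (P i k l + P i l k) / 2 with hQ
  set s : Fin d → Fin d → Fin d → ℝ := fun i j l => Q i j l + Q j i l - Q l i j with hs
  have hQs : ∀ i k l, Q i k l = Q i l k := by intro i k l; simp only [hQ]; ring
  have hE's : ∀ i j k l, E' i j k l = E' j i k l := by
    intro i j k l
    simp only [hE', hE]
    rw [hMs i j, hMs k j, hMs i l, hMs k l, hMs k i, hMs j l]; ring
  have hss : ∀ i j l, s i j l = s j i l := by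
    intro i j l; simp only [hs]; rw [hQs l i j]; ring
  -- contraction
  have hCc : ∀ i, ∑ k, ∑ l, C i k l * (ξ k * ξ l) = v i := by
    intro i
    have : ∀ k l, C i k l * (ξ k * ξ l) = (v i * (ξ k * ξ k) - ξ i * (v k * ξ k)) * (ξ l * ξ l) := by
      intro k l; simp only [hC]; ring
    simp_rw [this, ← Finset.mul_sum, hξ, mul_one, Finset.sum_sub_distrib, ← Finset.mul_sum, hξ, hv]
    ring
  have hEc : ∀ i j, ∑ k, ∑ l, E i j k l * (ξ k * ξ l) = M i j := by
    intro i j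
    have : ∀ k l, E i j k l * (ξ k * ξ l) = M i j * (ξ k * ξ k) * (ξ l * ξ l)
        - ξ i * (M j k * ξ k) * (ξ l * ξ l) - ξ j * (ξ k * ξ k) * (M i l * ξ l)
        + (ξ i * ξ j) * ξ k * (M k l * ξ l) := by
      intro k l; simp only [hE]; rw [hMs k j]; ring
    simp_rw [this, Finset.sum_add_distrib, Finset.sum_sub_distrib, ← Finset.mul_sum, hMξ, hξ]
    simp [← Finset.mul_sum, hMξ, hξ]
  have hE'c : ∀ i j, ∑ k, ∑ l, E' i j k l * (ξ k * ξ l) = M i j := by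
    intro i j
    have h2 : ∑ k, ∑ l, E i j l k * (ξ k * ξ l) = M i j := by
      rw [Finset.sum_comm, ← hEc i j]
      exact Finset.sum_congr rfl fun k _ => Finset.sum_congr rfl fun l _ => by ring
    have : ∀ k l, E' i j k l * (ξ k * ξ l) = 2⁻¹ * (E i j k l * (ξ k * ξ l)) + 2⁻¹ * (E i j l k * (ξ k * ξ l)) := by
      intro k l; simp only [hE']; ring
    simp_rw [this, Finset.sum_add_distrib, ← Finset.mul_sum, h2, hEc]; ring
  have hd' : (d:ℝ) ≠ 0 := by exact_mod_cast hd
  refine ⟨LL hd C E' s hE's hss, qq E' s, ?_, ?_⟩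
  · have hMM : ∀ i j, MM E' s (fun k l => ξ k * ξ l, 0) i j = M i j := by
      intro i j; simp [MM, hE'c]
    ext i
    · simp [LL, hCc]
    · rename_i j
      simp only [LL, LinearMap.coe_mk, AddHom.coe_mk, hMM, qq, hMt]
      simp only [hM]; rw [inv_mul_cancel_left₀ hd']; ring
  · intro ψ hψ
    have h1 : ∀ l, ContDiff ℝ (⊤ : ℕ∞) (pd l ψ) := fun l => pd_smooth l hψ
    have h2 : ∀ k l, ContDiff ℝ (⊤ : ℕ∞) (pd k (pd l ψ)) := fun k l => pd_smooth k (h1 l)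
    have hMMs : ∀ i j, ContDiff ℝ (⊤ : ℕ∞) (fun y => MM E' s (Jet ψ y) i j) := by
      intro i j
      simp only [MM, Jet]
      refine ContDiff.add (ContDiff.sum fun k _ => ContDiff.sum fun l _ => contDiff_const.mul (h2 k l))
        (ContDiff.sum fun l _ => contDiff_const.mul (h1 l))
    have hqs : ContDiff ℝ (⊤ : ℕ∞) (fun y => qq E' s (Jet ψ y)) := by
      simp only [qq, LinearMap.coe_mk, AddHom.coe_mk]
      exact contDiff_const.mul (ContDiff.sum fun i _ => hMMs i i)
    have hT1 : ∀ x j k l, pd j (pd k (pd l ψ)) x = pd k (pd j (pd l ψ)) x :=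
      fun x j k l => pd_comm j k (h1 l) x
    have hT2 : ∀ x j k l, pd j (pd k (pd l ψ)) x = pd j (pd l (pd k ψ)) x := by
      intro x j k l
      have : pd k (pd l ψ) = pd l (pd k ψ) := funext fun y => pd_comm k l hψ y
      rw [this]
    have hT3 : ∀ x j k l, pd j (pd k (pd l ψ)) x = pd l (pd k (pd j ψ)) x := by
      intro x j k l
      rw [hT2, hT1, hT2]
    constructor
    · intro x i
      have e1 : ∀ j, pd j (fun y => ((LL hd C E' s hE's hss (Jet ψ y)).2 : Mat d) i j) x
          = pd j (fun y => MM E' s (Jet ψ y) i j) x - if i = j then pd j (fun y => qq E' s (Jet ψ y)) x else 0 := by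
        intro j
        simp only [LL, LinearMap.coe_mk, AddHom.coe_mk]
        by_cases hij : i = j
        · simp only [hij, if_true]
          exact pd_sub _ _ _ _ (hMMs _ _) hqs
        · simp only [hij, if_false, sub_zero]
      simp_rw [e1, Finset.sum_sub_distrib]
      simp only [Finset.sum_ite_eq, Finset.mem_univ, if_true, sub_add_cancel]
      have e2 : ∀ j, pd j (fun y => MM E' s (Jet ψ y) i j) x =
          (∑ k, ∑ l, E' i j k l * pd j (pd k (pd l ψ)) x) + ∑ l, s i j l * pd j (pd l ψ) x := by
        intro j
        simp only [MM, Jet]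
        rw [pd_add]
        · congr 1
          · rw [pd_sum]
            · refine Finset.sum_congr rfl fun k _ => ?_
              rw [pd_sum]
              · exact Finset.sum_congr rfl fun l _ => pd_const_mul _ _ _ _ (h2 k l)
              · exact fun l => contDiff_const.mul (h2 k l)
            · exact fun k => ContDiff.sum fun l _ => contDiff_const.mul (h2 k l)
          · rw [pd_sum]
            · exact Finset.sum_congr rfl fun l _ => pd_const_mul _ _ _ _ (h1 l)
            · exact fun l => contDiff_const.mul (h1 l)
        · exact (ContDiff.sum fun k _ => ContDiff.sum fun l _ => contDiff_const.mul (h2 k l))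
        · exact (ContDiff.sum fun l _ => contDiff_const.mul (h1 l))
      simp_rw [e2, Finset.sum_add_distrib]
      have z1 : ∑ j, ∑ k, ∑ l, E i j k l * pd j (pd k (pd l ψ)) x = 0 := by
        apply asym3 (fun j k l => E i j k l) (fun j k l => pd j (pd k (pd l ψ)) x)
        · intro j k l; simp only [hE]; ring
        · intro j k l; exact hT3 x j k l
      have z2 : ∑ j, ∑ k, ∑ l, E i j l k * pd j (pd k (pd l ψ)) x = 0 := by
        rw [← z1]
        refine Finset.sum_congr rfl fun j _ => ?_
        rw [Finset.sum_comm]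
        refine Finset.sum_congr rfl fun k _ => Finset.sum_congr rfl fun l _ => ?_
        rw [hT2]
      have z3 : ∑ j, ∑ k, ∑ l, E' i j k l * pd j (pd k (pd l ψ)) x = 0 := by
        have : ∀ j k l, E' i j k l * pd j (pd k (pd l ψ)) x = 2⁻¹ * (E i j k l * pd j (pd k (pd l ψ)) x)
            + 2⁻¹ * (E i j l k * pd j (pd k (pd l ψ)) x) := by
          intro j k l; simp only [hE']; ring
        simp_rw [this, Finset.sum_add_distrib, ← Finset.mul_sum, z1, z2]; ring
      rw [z3, zero_add]
      -- B part
      have y1 : ∑ j, ∑ l, s i j l * pd j (pd l ψ) x = ∑ j, ∑ l, P i j l * pd j (pd l ψ) x := by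
        have sw : ∀ A : Fin d → Fin d → ℝ, ∑ j, ∑ l, A j l * pd j (pd l ψ) x = ∑ j, ∑ l, A l j * pd j (pd l ψ) x := by
          intro A
          rw [Finset.sum_comm]
          refine Finset.sum_congr rfl fun k _ => Finset.sum_congr rfl fun l _ => ?_
          rw [pd_comm _ _ hψ]
        have hq : ∀ j l, s i j l * pd j (pd l ψ) x = 2⁻¹ * (P i j l * pd j (pd l ψ) x) + 2⁻¹ * (P i l j * pd j (pd l ψ) x)
            + (Q j i l * pd j (pd l ψ) x - Q l i j * pd j (pd l ψ) x) := by
          intro j l; simp only [hs]; rw [show Q i j l = (P i j l + P i l j)/2 from rfl]; ring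
        simp_rw [hq, Finset.sum_add_distrib, Finset.sum_sub_distrib, ← Finset.mul_sum]
        rw [sw (fun j l => Q j i l), sw (fun j l => P i l j)]; ring
      rw [y1]
      simp only [LL, LinearMap.coe_mk, AddHom.coe_mk, Jet, hP, Finset.sum_mul, Finset.mul_sum]
      have : ∀ j, ∑ l, ∑ m, B i m * C m j l * pd j (pd l ψ) x = ∑ m, ∑ l, B i m * C m j l * pd j (pd l ψ) x :=
        fun j => Finset.sum_comm
      simp_rw [this]
      rw [Finset.sum_comm]
      exact Finset.sum_congr rfl fun m _ => Finset.sum_congr rfl fun k _ => Finset.sum_congr rfl fun l _ => by ring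
    · intro x
      have e2 : ∀ i, pd i (fun y => (LL hd C E' s hE's hss (Jet ψ y)).1 i) x =
          (∑ k, ∑ l, C i k l * pd i (pd k (pd l ψ)) x) := by
        intro i
        simp only [LL, LinearMap.coe_mk, AddHom.coe_mk, Jet]
        rw [pd_sum]
        · refine Finset.sum_congr rfl fun k _ => ?_
          rw [pd_sum]
          · exact Finset.sum_congr rfl fun l _ => pd_const_mul _ _ _ _ (h2 k l)
          · exact fun l => contDiff_const.mul (h2 k l)
        · exact fun k => ContDiff.sum fun l _ => contDiff_const.mul (h2 k l)
      simp_rw [e2]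
      have := asym3 (fun j k l => C j l k) (fun j k l => pd j (pd k (pd l ψ)) x)
        (by intro j k l; simp only [hC]; ring) (fun j k l => hT3 x j k l)
      rw [← this]
      refine Finset.sum_congr rfl fun j _ => ?_
      rw [Finset.sum_comm]
      refine Finset.sum_congr rfl fun k _ => Finset.sum_congr rfl fun l _ => ?_
      rw [hT2]

end pdlemmas

section main_aux
variable {d : ℕ}
open Filter Topology

lemma jet_smooth {ψ : Vec d → ℝ} (hψ : ContDiff ℝ (⊤ : ℕ∞) ψ) : ContDiff ℝ (⊤ : ℕ∞) (Jet ψ) := by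
  unfold Jet
  refine ContDiff.prodMk ?_ ?_
  · exact contDiff_pi.2 fun k => contDiff_pi.2 fun l => pd_smooth k (pd_smooth l hψ)
  · exact contDiff_pi.2 fun l => pd_smooth l hψ

lemma jet_zero {ψ : Vec d → ℝ} {x : Vec d} (hx : x ∉ tsupport ψ) : Jet ψ x = 0 := by
  have h1 : ∀ l, x ∉ tsupport (pd l ψ) := fun l h => hx (tsupport_fderiv_apply_subset ℝ _ h)
  have h2 : ∀ k l, x ∉ tsupport (pd k (pd l ψ)) := fun k l h =>
    h1 l (tsupport_fderiv_apply_subset ℝ _ h)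
  refine Prod.ext (funext fun k => funext fun l => ?_) (funext fun l => ?_)
  · exact image_eq_zero_of_notMem_tsupport (f := pd k (pd l ψ)) (h2 k l)
  · exact image_eq_zero_of_notMem_tsupport (f := pd l ψ) (h1 l)

lemma jet_tsupport {α : Type*} [Zero α] (ψ : Vec d → ℝ) (L : Mat d × Vec d → α) (hL : L 0 = 0) :
    tsupport (fun x => L (Jet ψ x)) ⊆ tsupport ψ := by
  apply closure_minimal _ (isClosed_tsupport ψ)
  intro x hx
  by_contra h
  exact hx (by simp [jet_zero h, hL])

/-- dot product -/
def dt (ξ : Vec d) : Vec d →L[ℝ] ℝ := ∑ i, ξ i • ContinuousLinearMap.proj i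

lemma dt_single (ξ : Vec d) (i : Fin d) : dt ξ (Pi.single i 1) = ξ i := by
  simp [dt, Pi.single_apply]

lemma dt_apply (ξ x : Vec d) : dt ξ x = ∑ i, ξ i * x i := by
  simp [dt]

lemma wave_fderiv (ξ : Vec d) (N : ℝ) (F : ℝ → ℝ) (f : ℝ) (x : Vec d)
    (h : HasDerivAt F f (N * dt ξ x)) (e : Vec d) :
    fderiv ℝ (fun y => F (N * dt ξ y)) x e = N * dt ξ e * f := by
  have h1 : HasFDerivAt (fun y => N * dt ξ y) (N • (dt ξ : Vec d →L[ℝ] ℝ)) x :=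
    ((dt ξ).hasFDerivAt).const_mul N
  have := (h.comp_hasFDerivAt x h1).fderiv
  simp only [Function.comp_def] at this
  rw [this]
  simp; ring

lemma wave_smooth (ξ : Vec d) (N : ℝ) (F : ℝ → ℝ) (h : ContDiff ℝ (⊤ : ℕ∞) F) :
    ContDiff ℝ (⊤ : ℕ∞) (fun y : Vec d => F (N * dt ξ y)) :=
  h.comp (contDiff_const.mul (dt ξ).contDiff)

lemma aux_jet (ξ : Vec d) (hξ : ∑ i, ξ i * ξ i = 1) (φ : Vec d → ℝ)
    (hφ : ContDiff ℝ (⊤ : ℕ∞) φ) (hc : HasCompactSupport φ)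
    (H H1 h : ℝ → ℝ) (sH : ContDiff ℝ (⊤ : ℕ∞) H) (sH1 : ContDiff ℝ (⊤ : ℕ∞) H1)
    (dH : ∀ t, HasDerivAt H (H1 t) t) (dH1 : ∀ t, HasDerivAt H1 (h t) t)
    (b b1 : ℝ) (hb : ∀ t, |H t| ≤ b) (hb1 : ∀ t, |H1 t| ≤ b1) :
    ∃ R, ∀ N : ℝ, 1 ≤ N → ∀ x,
      ‖Jet (fun x => N⁻¹ ^ 2 * (φ x * H (N * dt ξ x))) x
        - (φ x * h (N * dt ξ x)) • ((fun k l => ξ k * ξ l, 0) : Mat d × Vec d)‖ ≤ R / N := by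
  have hξ1 : ∀ k, |ξ k| ≤ 1 := by
    intro k
    have : ξ k * ξ k ≤ 1 := by
      rw [← hξ]
      exact Finset.single_le_sum (f := fun i => ξ i * ξ i) (fun i _ => mul_self_nonneg _) (Finset.mem_univ k)
    rw [abs_le]; constructor <;> nlinarith
  obtain ⟨D0, hD0⟩ := hc.exists_bound_of_continuous hφ.continuous
  have hJc : HasCompactSupport (Jet φ) :=
    hc.of_isClosed_subset (isClosed_tsupport _) (jet_tsupport φ id rfl)
  obtain ⟨D1, hD1⟩ := hJc.exists_bound_of_continuous (jet_smooth hφ).continuous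
  have p1 : ∀ l x, |pd l φ x| ≤ D1 := fun l x =>
    (norm_le_pi_norm (Jet φ x).2 l).trans ((norm_snd_le _).trans (hD1 x))
  have p2 : ∀ k l x, |pd k (pd l φ) x| ≤ D1 := fun k l x =>
    (norm_le_pi_norm ((Jet φ x).1 k) l).trans ((norm_le_pi_norm (Jet φ x).1 k).trans ((norm_fst_le _).trans (hD1 x)))
  have p0 : ∀ x, |φ x| ≤ D0 := hD0
  have nb : 0 ≤ b := (abs_nonneg _).trans (hb 0)
  have nb1 : 0 ≤ b1 := (abs_nonneg _).trans (hb1 0)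
  have nD0 : 0 ≤ D0 := (abs_nonneg _).trans (p0 0)
  have nD1 : 0 ≤ D1 := (norm_nonneg _).trans (hD1 0)
  refine ⟨D1 * b + 2 * D1 * b1 + D0 * b1, fun N hN x => ?_⟩
  have hN0 : 0 < N := by linarith
  have hNi : 0 < N⁻¹ := by positivity
  have hNi1 : N⁻¹ ≤ 1 := inv_le_one_of_one_le₀ hN
  have sW := wave_smooth ξ N H sH
  have sW1 := wave_smooth ξ N H1 sH1
  have q0 : ∀ l x, pd l (fun x => H (N * dt ξ x)) x = N * ξ l * H1 (N * dt ξ x) := by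
    intro l x; unfold pd; rw [wave_fderiv ξ N H _ x (dH _), dt_single]
  have q1 : ∀ l x, pd l (fun x => H1 (N * dt ξ x)) x = N * ξ l * h (N * dt ξ x) := by
    intro l x; unfold pd; rw [wave_fderiv ξ N H1 _ x (dH1 _), dt_single]
  have r1 : ∀ l, pd l (fun x => N⁻¹ ^ 2 * (φ x * H (N * dt ξ x))) = fun x =>
      N⁻¹ ^ 2 * (pd l φ x * H (N * dt ξ x)) + (N⁻¹ * ξ l) * (φ x * H1 (N * dt ξ x)) := by
    intro l; funext x
    rw [pd_const_mul _ _ _ _ (hφ.mul sW), pd_mul _ _ _ _ hφ sW, q0]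
    field_simp
  have r2 : ∀ k l, pd k (pd l (fun x => N⁻¹ ^ 2 * (φ x * H (N * dt ξ x)))) x = 
      N⁻¹ ^ 2 * (pd k (pd l φ) x * H (N * dt ξ x)) + N⁻¹ * (pd l φ x * ξ k * H1 (N * dt ξ x))
      + N⁻¹ * (ξ l * pd k φ x * H1 (N * dt ξ x)) + φ x * h (N * dt ξ x) * (ξ k * ξ l) := by
    intro k l
    rw [r1, pd_add _ _ _ _ (contDiff_const.mul ((pd_smooth l hφ).mul sW)) (contDiff_const.mul (hφ.mul sW1)),
      pd_const_mul _ _ _ _ ((pd_smooth l hφ).mul sW), pd_const_mul _ _ _ _ (hφ.mul sW1),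
      pd_mul _ _ _ _ (pd_smooth l hφ) sW, pd_mul _ _ _ _ hφ sW1, q0, q1]
    field_simp
    ring
  have hsq : N⁻¹ ^ 2 ≤ N⁻¹ := by nlinarith
  have t1 : ∀ a c : ℝ, |a| ≤ D1 → |c| ≤ b → |N⁻¹ ^ 2 * (a * c)| ≤ N⁻¹ * (D1 * b) := by
    intro a c ha hc
    rw [abs_mul, abs_mul, abs_of_nonneg (by positivity : 0 ≤ N⁻¹ ^ 2)]
    gcongr
  have t2 : ∀ a c e D : ℝ, 0 ≤ D → |a| ≤ D → |c| ≤ 1 → |e| ≤ b1 → |N⁻¹ * (a * c * e)| ≤ N⁻¹ * (D * b1) := by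
    intro a c e D hD ha hc he
    rw [abs_mul, abs_mul, abs_mul, abs_of_pos hNi]
    have : |a| * |c| ≤ D * 1 := by gcongr
    rw [mul_one] at this
    gcongr
  have hR : (D1 * b + 2 * D1 * b1 + D0 * b1) / N = N⁻¹ * (D1 * b) + N⁻¹ * (D1 * b1) + N⁻¹ * (D1 * b1) + N⁻¹ * (D0 * b1) := by
    field_simp; ring
  have hpos1 : 0 ≤ N⁻¹ * (D1 * b1) := by positivity
  have hpos2 : 0 ≤ N⁻¹ * (D0 * b1) := by positivity
  have hRn : 0 ≤ (D1 * b + 2 * D1 * b1 + D0 * b1) / N := by positivity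
  refine norm_prod_le_iff.2 ⟨?_, ?_⟩
  · refine (pi_norm_le_iff_of_nonneg hRn).2 fun k => (pi_norm_le_iff_of_nonneg hRn).2 fun l => ?_
    simp only [Jet, Prod.fst_sub, Prod.smul_fst, Pi.sub_apply, Pi.smul_apply, smul_eq_mul]
    rw [r2, hR, add_sub_cancel_right, Real.norm_eq_abs]
    have a1 := t1 _ _ (p2 k l x) (hb (N * dt ξ x))
    have a2 := t2 _ _ _ D1 nD1 (p1 l x) (hξ1 k) (hb1 (N * dt ξ x))
    have a3 := t2 _ _ _ D1 nD1 (p1 k x) (hξ1 l) (hb1 (N * dt ξ x))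
    rw [mul_comm (pd k φ x)] at a3
    refine (abs_add_le _ _).trans ?_
    have := abs_add_le (N⁻¹ ^ 2 * (pd k (pd l φ) x * H (N * dt ξ x))) (N⁻¹ * (pd l φ x * ξ k * H1 (N * dt ξ x)))
    linarith
  · refine (pi_norm_le_iff_of_nonneg hRn).2 fun l => ?_
    simp only [Jet, Prod.snd_sub, Prod.smul_snd, Pi.sub_apply, smul_zero, Pi.zero_apply, sub_zero]
    rw [r1, hR, Real.norm_eq_abs]
    have a1 := t1 _ _ (p1 l x) (hb (N * dt ξ x))
    have a2 := t2 _ _ _ D0 nD0 (p0 x) (hξ1 l) (hb1 (N * dt ξ x))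
    have e : (N⁻¹ * ξ l) * (φ x * H1 (N * dt ξ x)) = N⁻¹ * (φ x * ξ l * H1 (N * dt ξ x)) := by ring
    simp only [e]
    refine (abs_add_le _ _).trans ?_
    linarith

lemma aux_meas (ξ : Vec d) (hξ : ∑ i, ξ i * ξ i = 1) (φ : Vec d → ℝ)
    (hφ : ContDiff ℝ (⊤ : ℕ∞) φ) (hc : HasCompactSupport φ)
    (f : ℝ → ℝ) (hf : ContDiff ℝ (⊤ : ℕ∞) f) (hp : Function.Periodic f 1) :
    ∃ R, ∀ N : ℝ, 1 ≤ N → 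
      |(∫ x, φ x * f (N * dt ξ x)) - (∫ s in (-1/2:ℝ)..(1/2), f s) * ∫ x, φ x| ≤ R / N := by
  obtain ⟨F, sF, pF, dF, -⟩ := aux_antideriv f hf hp
  set m := ∫ s in (-1/2:ℝ)..(1/2), f s
  obtain ⟨b, hb⟩ := aux_bdd F sF.continuous pF
  have hfd : Continuous (fun x => fderiv ℝ φ x ξ) :=
    (hφ.continuous_fderiv (by simp)).clm_apply continuous_const
  have hfc : HasCompactSupport (fun x => fderiv ℝ φ x ξ) := hc.fderiv_apply ℝ ξ
  refine ⟨∫ x, |fderiv ℝ φ x ξ| * b, fun N hN => ?_⟩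
  have hN0 : 0 < N := by linarith
  have sW := wave_smooth ξ N F sF
  have sf := wave_smooth ξ N f hf
  have hdt : dt ξ ξ = 1 := by rw [dt_apply, hξ]
  have hd' : ∀ x, fderiv ℝ (fun y => F (N * dt ξ y)) x ξ = N * (f (N * dt ξ x) - m) := by
    intro x; rw [wave_fderiv ξ N F _ x (dF _), hdt, mul_one]
  have i1 : Integrable (fun x => φ x * f (N * dt ξ x)) :=
    (hφ.continuous.mul sf.continuous).integrable_of_hasCompactSupport hc.mul_right
  have i2 : Integrable φ := hφ.continuous.integrable_of_hasCompactSupport hc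
  have i3 : Integrable (fun x => fderiv ℝ φ x ξ * F (N * dt ξ x)) :=
    (hfd.mul sW.continuous).integrable_of_hasCompactSupport hfc.mul_right
  have i4 : Integrable (fun x => φ x * fderiv ℝ (fun y => F (N * dt ξ y)) x ξ) := by
    simp_rw [hd']
    exact (hφ.continuous.mul (continuous_const.mul (sf.continuous.sub continuous_const))).integrable_of_hasCompactSupport hc.mul_right
  have i5 : Integrable (fun x => φ x * F (N * dt ξ x)) :=
    (hφ.continuous.mul sW.continuous).integrable_of_hasCompactSupport hc.mul_right
  have ibp := integral_mul_fderiv_eq_neg_fderiv_mul_of_integrable i3 i4 i5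
    (fun x _ => sm_diff hφ x) (fun x _ => sm_diff sW x)
  have e : ∫ x, φ x * fderiv ℝ (fun y => F (N * dt ξ y)) x ξ
      = N * ((∫ x, φ x * f (N * dt ξ x)) - m * ∫ x, φ x) := by
    rw [← integral_const_mul, ← integral_sub i1 (i2.const_mul m), ← integral_const_mul]
    congr 1; funext x; rw [hd']; ring
  rw [e] at ibp
  have bd : |N * ((∫ x, φ x * f (N * dt ξ x)) - m * ∫ x, φ x)| ≤ ∫ x, |fderiv ℝ φ x ξ| * b := by
    rw [ibp, abs_neg]
    refine (abs_integral_le_integral_abs).trans ?_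
    apply integral_mono i3.abs
    · exact ((hfd.abs.mul continuous_const).integrable_of_hasCompactSupport (hfc.norm.mul_right))
    · intro x
      simp only [abs_mul]
      exact mul_le_mul_of_nonneg_left (hb _) (abs_nonneg _)
  rw [abs_mul, abs_of_pos hN0] at bd
  rw [le_div_iff₀ hN0]; linarith

lemma aux_cut (O : Set (Vec d)) (hO : IsOpen O) (hb : Bornology.IsBounded O) (η : ℝ) (hη : 0 < η) :
    ∃ φ : Vec d → ℝ, ContDiff ℝ (⊤ : ℕ∞) φ ∧ HasCompactSupport φ ∧ tsupport φ ⊆ O ∧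
      (∀ x, 0 ≤ φ x ∧ φ x ≤ 1) ∧ ∃ K, IsCompact K ∧ K ⊆ O ∧ (∀ x ∈ K, φ x = 1) ∧
      (volume (O \ K)).toReal ≤ η := by
  obtain ⟨K, hKO, hK, hKm⟩ := hO.measurableSet.exists_isCompact_sdiff_lt (μ := volume)
    hb.measure_lt_top.ne (ε := ENNReal.ofReal η) (by simpa using hη)
  obtain ⟨K', hK', hKK', hK'O⟩ := exists_compact_between hK hO hKO
  obtain ⟨φ, sφ, rφ, z, o⟩ := exists_contMDiff_zero_iff_one_iff_of_isClosed (n := (⊤:ℕ∞)) 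
    (modelWithCornersSelf ℝ (Vec d)) (s := (interior K')ᶜ) (t := K) isOpen_interior.isClosed_compl
    hK.isClosed (by
      rw [Set.disjoint_compl_left_iff_subset]; exact hKK')
  have hts : tsupport φ ⊆ K' := by
    apply closure_minimal _ hK'.isClosed
    intro x hx
    by_contra h
    exact hx ((z x).1 fun h' => h (interior_subset h'))
  refine ⟨φ, sφ.contDiff, hK'.of_isClosed_subset (isClosed_tsupport _) hts, hts.trans hK'O,
    fun x => rφ ⟨x, rfl⟩, K, hK, hKO, fun x hx => (o x).1 hx, ?_⟩
  exact ENNReal.toReal_le_of_le_ofReal hη.le hKm.le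

lemma aux_vol (O K A : Set (Vec d)) (hO : IsOpen O) (hb : Bornology.IsBounded O) (hK : IsCompact K)
    (hA : IsOpen A) (hAO : A ⊆ O) (G : Vec d → ℝ) (hG : Integrable G) (h1 : ∀ x, G x ≤ 1)
    (h2 : ∀ x, x ∉ O → G x ≤ 0) (h3 : ∀ x ∈ K, x ∉ A → G x ≤ 0) :
    ∫ x, G x ≤ (volume A).toReal + (volume (O \ K)).toReal := by
  have mA := hA.measurableSet
  have mB := hO.measurableSet.diff hK.measurableSet
  have fA : volume A ≠ ⊤ := (hb.subset hAO).measure_lt_top.ne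
  have fB : volume (O \ K) ≠ ⊤ := (hb.subset Set.sdiff_subset).measure_lt_top.ne
  have iA : Integrable (A.indicator (fun _ => (1:ℝ))) := (integrable_indicator_iff mA).2 (integrableOn_const fA)
  have iB : Integrable ((O \ K).indicator (fun _ => (1:ℝ))) := (integrable_indicator_iff mB).2 (integrableOn_const fB)
  calc ∫ x, G x ≤ ∫ x, (A.indicator (fun _ => (1:ℝ)) x + (O \ K).indicator (fun _ => (1:ℝ)) x) := by
        apply integral_mono hG (iA.add iB)
        intro x
        have n1 : 0 ≤ A.indicator (fun _ => (1:ℝ)) x := Set.indicator_nonneg (by simp) x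
        have n2 : 0 ≤ (O \ K).indicator (fun _ => (1:ℝ)) x := Set.indicator_nonneg (by simp) x
        show G x ≤ _ + _
        by_cases ha : x ∈ A
        · rw [Set.indicator_of_mem ha]; linarith [h1 x]
        by_cases ho : x ∈ O
        · by_cases hk : x ∈ K
          · linarith [h3 x hk ha]
          · rw [Set.indicator_of_mem (show x ∈ O \ K from ⟨ho, hk⟩)]; linarith [h1 x]
        · linarith [h2 x ho]
    _ = _ := by
        rw [integral_add iA iB, integral_indicator_const _ mA, integral_indicator_const _ mB]
        simp [Measure.real]

end main_aux

set_option maxHeartbeats 2000000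

/-- **Lemma 3.3: localized plane waves.** Let `d ≥ 2`, `B` a fixed matrix,
`w₁, w₂ ∈ ℝ^d × S₀^{d×d}` and `μ₁, μ₂ > 0` with `μ₁ + μ₂ = 1` and `w₂ − w₁ ∈ Λ`; set
`w = μ₁w₁ + μ₂w₂`. For every bounded open `O ⊂ ℝ^d` and `ε > 0` there is a subsolution
`w̃ = (ṽ, Ũ) ∈ C_c^∞(O)` with pressure `q ∈ C_c^∞(O)` (i.e. `div Ũ + ∇q = Bṽ`,
`div ṽ = 0` on ℝ^d) with (a) `dist(w + w̃ x, [w₁, w₂]) < ε` on `O`, and (b) disjoint open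
`O₁, O₂ ⊂ O` with `|w + w̃ x − wᵢ| < ε` on `Oᵢ` and `||Oᵢ| − μᵢ|O|| < ε`. -/
theorem stmt4 (d : ℕ) (hd : 2 ≤ d) (B : Mat d)
    (w1 w2 : Vec d × S0 d) (μ1 μ2 : ℝ)
    (hμ1 : 0 < μ1) (hμ2 : 0 < μ2) (hμ : μ1 + μ2 = 1)
    (hΛ : w2 - w1 ∈ Lam d)
    (O : Set (Vec d)) (hOopen : IsOpen O) (hObdd : Bornology.IsBounded O)
    (ε : ℝ) (hε : 0 < ε) :
    ∃ (wt : Vec d → Vec d × S0 d) (q : Vec d → ℝ),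
      ContDiff ℝ (⊤ : ℕ∞) (fun x => (wt x).1) ∧
      (∀ i j, ContDiff ℝ (⊤ : ℕ∞) (fun x => ((wt x).2 : Mat d) i j)) ∧
      ContDiff ℝ (⊤ : ℕ∞) q ∧
      HasCompactSupport wt ∧ tsupport wt ⊆ O ∧
      HasCompactSupport q ∧ tsupport q ⊆ O ∧
      -- div Ũ + ∇q = B ṽ on ℝ^d
      (∀ x i, (∑ j, pd j (fun y => ((wt y).2 : Mat d) i j) x) + pd i q x
          = ∑ j, B i j * (wt x).1 j) ∧
      -- div ṽ = 0 on ℝ^d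
      (∀ x, ∑ i, pd i (fun y => (wt y).1 i) x = 0) ∧
      -- (a)
      (∀ x ∈ O, Metric.infDist (μ1 • w1 + μ2 • w2 + wt x) (segment ℝ w1 w2) < ε) ∧
      -- (b)
      (∃ O1 O2 : Set (Vec d), IsOpen O1 ∧ IsOpen O2 ∧ O1 ⊆ O ∧ O2 ⊆ O ∧ Disjoint O1 O2 ∧
        (∀ x ∈ O1, ‖μ1 • w1 + μ2 • w2 + wt x - w1‖ < ε) ∧
        (∀ x ∈ O2, ‖μ1 • w1 + μ2 • w2 + wt x - w2‖ < ε) ∧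
        |(volume O1).toReal - μ1 * (volume O).toReal| < ε ∧
        |(volume O2).toReal - μ2 * (volume O).toReal| < ε) := by
  have hd0 : d ≠ 0 := by omega
  obtain ⟨-, qb, ξ0, hξ0, hU0, hv0⟩ := hΛ
  -- normalise the direction
  obtain ⟨ξ, hξ, hU, hv⟩ : ∃ ξ : Vec d, ∑ i, ξ i * ξ i = 1 ∧
      (∀ i, (∑ j, ((w2 - w1).2 : Mat d) i j * ξ j) + qb * ξ i = 0) ∧
      ∑ i, (w2 - w1).1 i * ξ i = 0 := by
    have hS : 0 < ∑ i, ξ0 i * ξ0 i := by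
      obtain ⟨i, hi⟩ := Function.ne_iff.1 hξ0
      exact Finset.sum_pos' (fun i _ => mul_self_nonneg _) ⟨i, Finset.mem_univ i, mul_self_pos.2 hi⟩
    set r := Real.sqrt (∑ i, ξ0 i * ξ0 i) with hr
    have hr0 : 0 < r := Real.sqrt_pos.2 hS
    have hrr : r * r = ∑ i, ξ0 i * ξ0 i := Real.mul_self_sqrt hS.le
    refine ⟨fun i => r⁻¹ * ξ0 i, ?_, ?_, ?_⟩
    · have : ∀ i, r⁻¹ * ξ0 i * (r⁻¹ * ξ0 i) = r⁻¹ * r⁻¹ * (ξ0 i * ξ0 i) := fun i => by ring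
      simp_rw [this, ← Finset.mul_sum, ← hrr]
      field_simp
    · intro i
      have : ∀ j, ((w2 - w1).2 : Mat d) i j * (r⁻¹ * ξ0 j) = r⁻¹ * (((w2 - w1).2 : Mat d) i j * ξ0 j) :=
        fun j => by ring
      simp_rw [this, ← Finset.mul_sum]
      have := hU0 i
      linear_combination r⁻¹ * this
    · have : ∀ j, (w2 - w1).1 j * (r⁻¹ * ξ0 j) = r⁻¹ * ((w2 - w1).1 j * ξ0 j) :=
        fun j => by ring
      simp_rw [this, ← Finset.mul_sum, hv0, mul_zero]
  set wb := w2 - w1 with hwb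
  obtain ⟨L, ℓ, hLw, hLeq⟩ := aux_pot hd0 B wb qb ξ hξ hU hv
  -- constants
  set V := (volume O).toReal with hV
  have hV0 : 0 ≤ V := ENNReal.toReal_nonneg
  set W := ‖wb‖ with hW
  have hW0 : 0 ≤ W := norm_nonneg _
  set δ := min (1/4) (ε / (4 * (W + 1))) with hδ
  have hδ0 : 0 < δ := by positivity
  have hδ4 : δ ≤ 1/4 := min_le_left _ _
  have hδW : 4 * (δ * W) ≤ ε := by
    have h1 : δ ≤ ε / (4 * (W + 1)) := min_le_right _ _
    rw [le_div_iff₀ (by positivity)] at h1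
    nlinarith
  set η := min 1 (ε / 8) with hη
  have hη0 : 0 < η := by positivity
  have hη1 : η ≤ 1 := min_le_left _ _
  have hη8 : η ≤ ε / 8 := min_le_right _ _
  set η' := ε / (4 * (V + 1)) with hη'
  have hη'0 : 0 < η' := by positivity
  have hη'V : η' * (V + 1) = ε / 4 := by rw [hη']; field_simp
  set κ := min δ (min (η' / 2) (δ * η' / 2)) with hκ
  have hκ0 : 0 < κ := by positivity
  have hκ1 : κ ≤ δ := min_le_left _ _
  have hκ2 : κ ≤ η' / 2 := (min_le_right _ _).trans (min_le_left _ _)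
  have hκ3 : κ ≤ δ * η' / 2 := (min_le_right _ _).trans (min_le_right _ _)
  -- profile
  obtain ⟨g, sg, pg, bg, mg, vg⟩ := aux_g μ2 κ hμ2 (by linarith) hκ0
  set m := ∫ s in (-1/2:ℝ)..(1/2), g s with hm
  set z := ∫ s in (-1/2:ℝ)..(1/2), g s * (1 - g s) with hz
  obtain ⟨H1, sH1, pH1, dH1, zH1⟩ := aux_antideriv g sg pg
  obtain ⟨H, sH, pH, dH, -⟩ := aux_antideriv H1 sH1 pH1
  rw [zH1] at dH
  simp only [sub_zero] at dH
  obtain ⟨b, hb⟩ := aux_bdd H sH.continuous pH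
  obtain ⟨b1, hb1⟩ := aux_bdd H1 sH1.continuous pH1
  -- cutoff
  obtain ⟨φ, sφ, cφ, tφ, bφ, K, hK, hKO, φK, hKη⟩ := aux_cut O hOopen hObdd η hη0
  obtain ⟨R, hR⟩ := aux_jet ξ hξ φ sφ cφ H H1 (fun t => g t - m) sH sH1 dH dH1 b b1 hb hb1
  -- volume test functions
  set f1 : ℝ → ℝ := fun t => (1 - g t) - δ⁻¹ * (g t * (1 - g t)) with hf1
  set f2 : ℝ → ℝ := fun t => g t - δ⁻¹ * (g t * (1 - g t)) with hf2
  have sgg : ContDiff ℝ (⊤ : ℕ∞) (fun t => g t * (1 - g t)) := sg.mul (contDiff_const.sub sg)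
  have sf1 : ContDiff ℝ (⊤ : ℕ∞) f1 := (contDiff_const.sub sg).sub (contDiff_const.mul sgg)
  have sf2 : ContDiff ℝ (⊤ : ℕ∞) f2 := sg.sub (contDiff_const.mul sgg)
  have pf1 : Function.Periodic f1 1 := fun t => by simp only [hf1, pg t]
  have pf2 : Function.Periodic f2 1 := fun t => by simp only [hf2, pg t]
  have c1 : Continuous (fun t => 1 - g t) := continuous_const.sub sg.continuous
  have c2 : Continuous (fun t => δ⁻¹ * (g t * (1 - g t))) := continuous_const.mul sgg.continuous
  have m1 : ∫ s in (-1/2:ℝ)..(1/2), f1 s = 1 - m - δ⁻¹ * z := by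
    simp only [hf1]
    rw [intervalIntegral.integral_sub (c1.intervalIntegrable _ _)
      (c2.intervalIntegrable _ _),
      intervalIntegral.integral_sub (continuous_const.intervalIntegrable _ _) (sg.continuous.intervalIntegrable _ _),
      intervalIntegral.integral_const_mul, intervalIntegral.integral_const]
    norm_num [hm, hz]
  have m2 : ∫ s in (-1/2:ℝ)..(1/2), f2 s = m - δ⁻¹ * z := by
    simp only [hf2]
    rw [intervalIntegral.integral_sub (sg.continuous.intervalIntegrable _ _)
      (c2.intervalIntegrable _ _),
      intervalIntegral.integral_const_mul]
  obtain ⟨R1, hR1⟩ := aux_meas ξ hξ φ sφ cφ f1 sf1 pf1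
  obtain ⟨R2, hR2⟩ := aux_meas ξ hξ φ sφ cφ f2 sf2 pf2
  set L' := LinearMap.toContinuousLinearMap L with hL'
  -- choose N
  obtain ⟨N, hN1, hNa, hNb, hNc⟩ : ∃ N : ℝ, 1 ≤ N ∧ ‖L'‖ * (R / N) < ε / 4 ∧ R1 / N < ε / 4 ∧ R2 / N < ε / 4 := by
    have t : ∀ c : ℝ, Filter.Tendsto (fun N : ℝ => c / N) Filter.atTop (nhds 0) :=
      fun c => Filter.Tendsto.div_atTop tendsto_const_nhds Filter.tendsto_id
    have t0 : Filter.Tendsto (fun N : ℝ => ‖L'‖ * (R / N)) Filter.atTop (nhds 0) := by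
      simpa using (t R).const_mul ‖L'‖
    have h4 : (0:ℝ) < ε / 4 := by positivity
    obtain ⟨N, h⟩ := ((Filter.eventually_ge_atTop (1:ℝ)).and ((t0.eventually (gt_mem_nhds h4)).and
      (((t R1).eventually (gt_mem_nhds h4)).and ((t R2).eventually (gt_mem_nhds h4))))).exists
    exact ⟨N, h.1, h.2.1, h.2.2.1, h.2.2.2⟩
  specialize hR N hN1
  specialize hR1 N hN1
  specialize hR2 N hN1
  set ψ : Vec d → ℝ := fun x => N⁻¹ ^ 2 * (φ x * H (N * dt ξ x)) with hψ
  have sψ : ContDiff ℝ (⊤ : ℕ∞) ψ := contDiff_const.mul (sφ.mul (wave_smooth ξ N H sH))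
  have tψ : tsupport ψ ⊆ tsupport φ := by
    apply closure_minimal _ (isClosed_tsupport φ)
    intro x hx
    apply subset_tsupport
    intro h0
    exact hx (by simp [hψ, h0])
  have cψ : HasCompactSupport ψ := cφ.of_isClosed_subset (isClosed_tsupport _) tψ
  have twt := jet_tsupport ψ L (map_zero L)
  have tq := jet_tsupport ψ ℓ (map_zero ℓ)
  obtain ⟨eq1, eq2⟩ := hLeq ψ sψ
  have swt : ContDiff ℝ (⊤ : ℕ∞) (fun x => L (Jet ψ x)) := L'.contDiff.comp (jet_smooth sψ)
  have sq : ContDiff ℝ (⊤ : ℕ∞) (fun x => ℓ (Jet ψ x)) :=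
    (LinearMap.toContinuousLinearMap ℓ).contDiff.comp (jet_smooth sψ)
  -- the error
  have herr : ∀ x, ‖L (Jet ψ x) - (φ x * (g (N * dt ξ x) - m)) • wb‖ < ε / 4 := by
    intro x
    rw [← hLw, ← map_smul, ← map_sub]
    refine lt_of_le_of_lt ((L'.le_opNorm _).trans ?_) hNa
    exact mul_le_mul_of_nonneg_left (hR x) (norm_nonneg _)
  have hmain : ∀ x, ‖μ1 • w1 + μ2 • w2 + L (Jet ψ x)
      - (w1 + (μ2 + φ x * (g (N * dt ξ x) - μ2)) • wb)‖ < ε / 4 + δ * W := by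
    intro x
    have e : μ1 • w1 + μ2 • w2 + L (Jet ψ x) - (w1 + (μ2 + φ x * (g (N * dt ξ x) - μ2)) • wb)
        = (L (Jet ψ x) - (φ x * (g (N * dt ξ x) - m)) • wb) + (φ x * (μ2 - m)) • wb := by
      rw [show μ1 = 1 - μ2 by linarith, hwb]
      module
    rw [e]
    refine (norm_add_le _ _).trans_lt ?_
    have : ‖(φ x * (μ2 - m)) • wb‖ ≤ δ * W := by
      rw [norm_smul, Real.norm_eq_abs, abs_mul, abs_of_nonneg (bφ x).1, abs_sub_comm]
      have : φ x * |m - μ2| ≤ 1 * δ := mul_le_mul (bφ x).2 (mg.le.trans hκ1) (abs_nonneg _) zero_le_one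
      rw [one_mul] at this
      exact mul_le_mul_of_nonneg_right this hW0
    linarith [herr x]
  -- the sets
  have cg : Continuous (fun x => g (N * dt ξ x)) := (wave_smooth ξ N g sg).continuous
  have φ0 : ∀ x, x ∉ O → φ x = 0 := fun x hx => image_eq_zero_of_notMem_tsupport fun h => hx (tφ h)
  set O1 : Set (Vec d) := {x | 1 - δ < φ x} ∩ {x | g (N * dt ξ x) < δ} with hO1
  set O2 : Set (Vec d) := {x | 1 - δ < φ x} ∩ {x | 1 - δ < g (N * dt ξ x)} with hO2
  have oO1 : IsOpen O1 := (isOpen_lt continuous_const sφ.continuous).inter (isOpen_lt cg continuous_const)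
  have oO2 : IsOpen O2 := (isOpen_lt continuous_const sφ.continuous).inter (isOpen_lt continuous_const cg)
  have sub : ∀ x, 1 - δ < φ x → x ∈ O := by
    intro x hx
    by_contra h
    rw [φ0 x h] at hx; linarith
  have sO1 : O1 ⊆ O := fun x hx => sub x hx.1
  have sO2 : O2 ⊆ O := fun x hx => sub x hx.1
  have dj : Disjoint O1 O2 := by
    rw [Set.disjoint_left]
    rintro x ⟨-, h1⟩ ⟨-, h2⟩
    simp only [Set.mem_ofPred_eq] at h1 h2
    linarith
  -- integrals of φ
  have iφ : Integrable φ := sφ.continuous.integrable_of_hasCompactSupport cφ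
  have Iφ_le : ∫ x, φ x ≤ V + 1 := by
    have := aux_vol O K O hOopen hObdd hK hOopen subset_rfl φ iφ (fun x => (bφ x).2)
      (fun x hx => (φ0 x hx).le) (fun x hx h => absurd (hKO hx) h)
    linarith
  have fO : volume O ≠ ⊤ := hObdd.measure_lt_top.ne
  have Iφ_ge : V - η ≤ ∫ x, φ x := by
    have h1 : (volume K).toReal ≤ ∫ x, φ x := by
      have := integral_mono (μ := volume) (f := K.indicator (fun _ => (1:ℝ))) (g := φ)
        ((integrable_indicator_iff hK.measurableSet).2 (integrableOn_const hK.measure_lt_top.ne)) iφ (by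
          intro x
          by_cases h : x ∈ K
          · rw [Set.indicator_of_mem h, φK x h]
          · rw [Set.indicator_of_notMem h]; exact (bφ x).1)
      rw [integral_indicator_const _ hK.measurableSet] at this
      simpa [Measure.real] using this
    have h2 : V ≤ (volume K).toReal + (volume (O \ K)).toReal := by
      rw [← ENNReal.toReal_add hK.measure_lt_top.ne (hObdd.subset Set.sdiff_subset).measure_lt_top.ne]
      refine ENNReal.toReal_mono (ENNReal.add_ne_top.2 ⟨hK.measure_lt_top.ne, (hObdd.subset Set.sdiff_subset).measure_lt_top.ne⟩) ?_
      refine (measure_mono ?_).trans (measure_union_le _ _)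
      intro x hx
      by_cases h : x ∈ K
      · exact Or.inl h
      · exact Or.inr ⟨hx, h⟩
    linarith
  have hδδ : δ⁻¹ * δ = 1 := inv_mul_cancel₀ hδ0.ne'
  have hδi : 0 < δ⁻¹ := by positivity
  have hzb : δ⁻¹ * z ≤ η' / 2 := by
    have : δ⁻¹ * z ≤ δ⁻¹ * (δ * η' / 2) := mul_le_mul_of_nonneg_left (vg.le.trans hκ3) hδi.le
    have e : δ⁻¹ * (δ * η' / 2) = (δ⁻¹ * δ) * η' / 2 := by ring
    rw [e, hδδ] at this; linarith
  -- general volume lower bound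
  have vol : ∀ (f : ℝ → ℝ) (A : Set (Vec d)) (M μ R' : ℝ), ContDiff ℝ (⊤ : ℕ∞) f → IsOpen A → A ⊆ O →
      (∀ t, f t ≤ 1) → (∀ x ∈ K, x ∉ A → f (N * dt ξ x) ≤ 0) → μ - η' ≤ M → 0 < μ → μ ≤ 1 →
      |(∫ x, φ x * f (N * dt ξ x)) - M * ∫ x, φ x| ≤ R' / N → R' / N < ε / 4 →
      μ * V - (volume A).toReal < ε := by
    intro f A M μ R' sf oA sA f1 fK hM μ0 μ1 h1 h2
    have i1 : Integrable (fun x => φ x * f (N * dt ξ x)) :=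
      (sφ.continuous.mul (wave_smooth ξ N f sf).continuous).integrable_of_hasCompactSupport cφ.mul_right
    have := aux_vol O K A hOopen hObdd hK oA sA _ i1
      (fun x => (mul_le_mul_of_nonneg_left (f1 _) (bφ x).1).trans (by rw [mul_one]; exact (bφ x).2)) (fun x hx => by simp [φ0 x hx])
      (fun x hx hA => by rw [φK x hx, one_mul]; exact fK x hx hA)
    have h3 := (abs_le.1 h1).1
    have Iφ0 : 0 ≤ ∫ x, φ x := integral_nonneg fun x => (bφ x).1
    have h4 : (μ - η') * ∫ x, φ x ≤ M * ∫ x, φ x := mul_le_mul_of_nonneg_right hM Iφ0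
    have h5 : η' * ∫ x, φ x ≤ η' * (V + 1) := mul_le_mul_of_nonneg_left Iφ_le hη'0.le
    have h6 : μ * (V - η) ≤ μ * ∫ x, φ x := mul_le_mul_of_nonneg_left Iφ_ge μ0.le
    have h7 : μ * η ≤ 1 * η := mul_le_mul_of_nonneg_right μ1 hη0.le
    rw [sub_mul] at h4
    rw [mul_sub] at h6
    rw [hη'V] at h5
    linarith only [this, h3, h4, h5, h6, h7, hη8, h2, hKη, hε]
  have gz : ∀ t, 0 ≤ g t * (1 - g t) := fun t => mul_nonneg (bg t).1 (by linarith [(bg t).2])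
  have vol1 : μ1 * V - (volume O1).toReal < ε := by
    refine vol f1 O1 _ μ1 R1 sf1 oO1 sO1 ?_ ?_ ?_ hμ1 (by linarith) hR1 hNb
    · intro t
      have := mul_nonneg hδi.le (gz t)
      simp only [hf1]; linarith [(bg t).1]
    · intro x hx hA
      have hg : δ ≤ g (N * dt ξ x) := by
        by_contra h
        exact hA ⟨by simp [φK x hx, hδ0], not_le.1 h⟩
      have h1 : 0 ≤ 1 - g (N * dt ξ x) := by linarith [(bg (N * dt ξ x)).2]
      have h2 : 1 ≤ δ⁻¹ * g (N * dt ξ x) := by rw [← hδδ]; exact mul_le_mul_of_nonneg_left hg hδi.le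
      simp only [hf1]
      nlinarith only [h1, h2]
    · rw [m1]; linarith [(abs_lt.1 mg).2]
  have vol2 : μ2 * V - (volume O2).toReal < ε := by
    refine vol f2 O2 _ μ2 R2 sf2 oO2 sO2 ?_ ?_ ?_ hμ2 (by linarith) hR2 hNc
    · intro t
      have := mul_nonneg hδi.le (gz t)
      simp only [hf2]; linarith [(bg t).2]
    · intro x hx hA
      have hg : δ ≤ 1 - g (N * dt ξ x) := by
        by_contra h
        exact hA ⟨by simp [φK x hx, hδ0], by simp only [Set.mem_ofPred_eq]; linarith [not_le.1 h]⟩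
      have h1 := (bg (N * dt ξ x)).1
      have h2 : 1 ≤ δ⁻¹ * (1 - g (N * dt ξ x)) := hδδ.symm.le.trans (mul_le_mul_of_nonneg_left hg hδi.le)
      simp only [hf2]
      nlinarith only [h1, h2]
    · rw [m2]; linarith [(abs_lt.1 mg).1]
  have vsum : (volume O1).toReal + (volume O2).toReal ≤ V := by
    have f1 : volume O1 ≠ ⊤ := (hObdd.subset sO1).measure_lt_top.ne
    have f2 : volume O2 ≠ ⊤ := (hObdd.subset sO2).measure_lt_top.ne
    rw [← ENNReal.toReal_add f1 f2, ← measure_union dj oO2.measurableSet]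
    exact ENNReal.toReal_mono fO (measure_mono (Set.union_subset sO1 sO2))
  have hμV : μ1 * V + μ2 * V = V := by rw [← add_mul, hμ, one_mul]
  refine ⟨fun x => L (Jet ψ x), fun x => ℓ (Jet ψ x), ?_, ?_, sq, ?_, twt.trans (tψ.trans tφ), ?_,
    tq.trans (tψ.trans tφ), eq1, eq2, ?_, O1, O2, oO1, oO2, sO1, sO2, dj, ?_, ?_, ?_, ?_⟩
  · exact contDiff_fst.comp swt
  · intro i j
    have h1 : ContDiff ℝ (⊤ : ℕ∞) (fun x => ((L (Jet ψ x)).2 : Mat d)) :=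
      (S0 d).subtypeL.contDiff.comp (contDiff_snd.comp swt)
    exact contDiff_pi.1 (contDiff_pi.1 h1 i) j
  · exact cψ.of_isClosed_subset (isClosed_tsupport _) twt
  · exact cψ.of_isClosed_subset (isClosed_tsupport _) tq
  · intro x _
    set p := μ2 + φ x * (g (N * dt ξ x) - μ2) with hp
    have hp0 : 0 ≤ p := by nlinarith only [bφ x, bg (N * dt ξ x), hμ1, hμ2, hμ, hp]
    have hp1 : p ≤ 1 := by nlinarith only [bφ x, bg (N * dt ξ x), hμ1, hμ2, hμ, hp]
    have hmem : w1 + p • wb ∈ segment ℝ w1 w2 := by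
      refine ⟨1 - p, p, by linarith, hp0, by ring, ?_⟩
      rw [hwb]; module
    refine (Metric.infDist_le_dist_of_mem hmem).trans_lt ?_
    rw [dist_eq_norm]
    refine (hmain x).trans_le ?_
    linarith
  · rintro x ⟨h1, h2⟩
    simp only [Set.mem_ofPred_eq] at h1 h2
    set p := μ2 + φ x * (g (N * dt ξ x) - μ2) with hp
    have e : μ1 • w1 + μ2 • w2 + L (Jet ψ x) - w1
        = (μ1 • w1 + μ2 • w2 + L (Jet ψ x) - (w1 + p • wb)) + p • wb := by abel
    rw [e]
    refine (norm_add_le _ _).trans_lt ?_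
    have hp2 : ‖p • wb‖ ≤ 2 * δ * W := by
      rw [norm_smul, Real.norm_eq_abs]
      refine mul_le_mul_of_nonneg_right ?_ hW0
      rw [abs_le]
      constructor <;> nlinarith only [bφ x, bg (N * dt ξ x), hμ1, hμ2, hμ, hp, h1, h2, hδ0]
    have := hmain x
    linarith
  · rintro x ⟨h1, h2⟩
    simp only [Set.mem_ofPred_eq] at h1 h2
    set p := μ2 + φ x * (g (N * dt ξ x) - μ2) with hp
    have e : μ1 • w1 + μ2 • w2 + L (Jet ψ x) - w2
        = (μ1 • w1 + μ2 • w2 + L (Jet ψ x) - (w1 + p • wb)) + (p - 1) • wb := by rw [hwb]; module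
    rw [e]
    refine (norm_add_le _ _).trans_lt ?_
    have hp2 : ‖(p - 1) • wb‖ ≤ 2 * δ * W := by
      rw [norm_smul, Real.norm_eq_abs]
      refine mul_le_mul_of_nonneg_right ?_ hW0
      rw [abs_le]
      constructor <;> nlinarith only [bφ x, bg (N * dt ξ x), hμ1, hμ2, hμ, hp, h1, h2, hδ0]
    have := hmain x
    linarith
  · rw [abs_lt]; constructor <;> linarith
  · rw [abs_lt]; constructor <;> linarith
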